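/- For every fixed x ∈ ℝ, the function τ ↦ g_τ(x) on H satisfies ξ₁ g_τ(x) = (√(2v)/2) · x · e(x²τ/2), i.e. 2iv · conj(∂/∂conj(τ) g_τ(x)) = (√(2v)/2) · x · e(x²τ/2) for all τ = u+iv ∈ H. -/

import Mathlib

open Complex MeasureTheory
open scoped Classical

noncomputable section

/-- `e(a) = exp(2πia)`. -/
def e (a : ℂ) : ℂ := Complex.exp (2 * (Real.pi : ℂ) * Complex.I * a)

/-- The Fourier transform `F(g)(x) = ∫ g(w) e(wx) dw`. -/
def fourierT (g : ℝ → ℂ) (x : ℝ) : ℂ := ∫ w : ℝ, g w * e ((w * x : ℝ))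

/-- The operator `E_σ(f)(x) = e(x²σ/2) ∫_0^x e(-w²σ/2) f(w) dw`. -/
def Eop (σ : ℂ) (f : ℝ → ℂ) (x : ℝ) : ℂ :=
  e ((x : ℂ)^2 * σ / 2) * ∫ w in (0:ℝ)..x, e (-(w : ℂ)^2 * σ / 2) * f w

/-- `ω_τ(x) = e(-x²τ/2) ∑_{m ∈ ℤ+1/2, m ≥ |x|} e(m²τ/2 + m/2)`. -/
def omega (τ : ℂ) (x : ℝ) : ℂ :=
  e (-(x : ℂ)^2 * τ / 2) *
    ∑' m : ℤ, if |x| ≤ (m : ℝ) + 1/2 then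
      e (((m : ℂ) + 1/2)^2 / 2 * τ + ((m : ℂ) + 1/2) / 2) else 0

/-- `η³(τ) = -i ∑_{m ∈ ℤ+1/2} m e(m²τ/2 + m/2)`. -/
def eta3 (τ : ℂ) : ℂ :=
  -Complex.I * ∑' m : ℤ, ((m : ℂ) + 1/2) * e (((m : ℂ) + 1/2)^2 / 2 * τ + ((m : ℂ) + 1/2) / 2)

/-- The complementary error function. -/
def erfc (x : ℝ) : ℝ := (2 / Real.sqrt Real.pi) * ∫ t in Set.Ioi x, Real.exp (-t^2)

/-- `g⁺_τ`. -/
def gplus (τ : ℂ) (x : ℝ) : ℂ :=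
  e (-(x : ℂ)^2 * τ / 2) * ((Real.sign x : ℂ) / (Complex.I * eta3 τ)) *
    ∑' m : ℤ, if |x| < (m : ℝ) + 1/2 then
      (((m : ℝ) + 1/2 - |x| : ℝ) : ℂ) * e (((m : ℂ) + 1/2)^2 / 2 * τ + ((m : ℂ) + 1/2) / 2)
    else 0

/-- `g*_τ`. -/
def gstar (τ : ℂ) (x : ℝ) : ℂ :=
  e (-(x : ℂ)^2 * τ / 2) * ((Real.sign x : ℂ) / 2) *
    (erfc (Real.sqrt (2 * Real.pi * τ.im) * |x|) : ℂ)

/-- `g_τ = g⁺_τ - g*_τ`. -/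
def gfun (τ : ℂ) (x : ℝ) : ℂ := gplus τ x - gstar τ x

/-- The operator `ξ_k f = 2i v^k conj(∂f/∂τ̄)`, with `∂/∂τ̄ = (1/2)(∂/∂u + i ∂/∂v)`. -/
def xi (k : ℝ) (f : ℂ → ℂ) (τ : ℂ) : ℂ :=
  2 * Complex.I * ((τ.im ^ k : ℝ) : ℂ) *
    (starRingEnd ℂ) ((1/2 : ℂ) * (fderiv ℝ f τ 1 + Complex.I * fderiv ℝ f τ Complex.I))

/-- Sum of divisors function `σ₁`. -/
def sigma1 (n : ℕ) : ℕ := ∑ d ∈ Nat.divisors n, d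

/-- The weight 2 Eisenstein series `E₂`. -/
def E2 (τ : ℂ) : ℂ := 1 - 24 * ∑' n : ℕ, (sigma1 (n+1) : ℂ) * e ((n + 1 : ℂ) * τ)

/-- `ϑ̃_{N,h}`. -/
def tvtheta (N : ℕ) (h : ℝ) (τ : ℂ) : ℂ :=
  (if ∃ m : ℤ, h = (m : ℝ) + 1/2 then
      e ((h : ℂ) / 2) * E2 τ / (12 * (N : ℂ) * Complex.I * eta3 τ) else 0)
  + ∑' n : ℤ, gfun τ ((N : ℝ) * n + h)

/-- The Schwartz function `φ_τ(x,y) = √(2v)·x·e(x²τ/2 - y²τ̄/2)`. -/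
def Phi (τ : ℂ) (x y : ℝ) : ℂ :=
  (Real.sqrt (2 * τ.im) : ℂ) * (x : ℂ) *
    e ((x : ℂ)^2 * τ / 2 - (y : ℂ)^2 * (starRingEnd ℂ) τ / 2)

/-- The signature (1,1) bilinear form `B((a₁,a₂),(b₁,b₂)) = a₁b₂ + a₂b₁`. -/
def Bform (a b : ℝ × ℝ) : ℝ := a.1 * b.2 + a.2 * b.1

/-- `Z⁺_t = (t/√2, t⁻¹/√2)`. -/
def Zp (t : ℝ) : ℝ × ℝ := (t / Real.sqrt 2, t⁻¹ / Real.sqrt 2)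

/-- `Z⁻_t = (t/√2, -t⁻¹/√2)`. -/
def Zm (t : ℝ) : ℝ × ℝ := (t / Real.sqrt 2, -t⁻¹ / Real.sqrt 2)

end

/-! The function `g⁺` is holomorphic in `τ`: its theta series converges locally uniformly, and its
denominator `η³` has no zeros because it is the cube of Dedekind's eta product. Hence
`ξ₁ g = -ξ₁ g*`. In `g*` only the error function is not holomorphic; its derivative contributes
`exp(-2πvx²)`, which turns the conjugate of the prefactor `e(-x²τ/2)` into `e(x²τ/2)`.

That the series `η³` is the cube of the product is Jacobi's identity
`∑ (-1)^m (2m+1) q^{m(m+1)/2} = 2 ∏ (1 - q^n)³`. It is the limit `n → ∞` of a finite identity,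
proved by induction on `n`: up to scalar factors, passing from `n` to `n + 1` adds to the terms a
second difference in `m`, and summing a second difference against the affine weight `2m + 1`
gives zero. -/

open Filter Topology

section SecondDifference

variable {R : Type*} [CommRing R] [TopologicalSpace R] [IsTopologicalRing R]

lemma hasSum_affine_mul_second_difference (a b : R) {f : ℤ → R} (hf : Summable f)
    (hmf : Summable fun m : ℤ => (m : R) * f m) :
    HasSum (fun m : ℤ => (a * m + b) * (f (m - 1) - 2 * f m + f (m + 1))) 0 := by
  set w : ℤ → R := fun m => (a * m + b) * f m
  have hw : HasSum w (∑' m, w m) :=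
    (((hmf.mul_left a).add (hf.mul_left b)).congr fun m => by simp only [w]; ring).hasSum
  have hleft : HasSum (fun m : ℤ => (a * m + b) * f (m - 1)) (∑' m, w m + a * ∑' m, f m) := by
    refine ((Equiv.subRight 1).hasSum_iff.mpr (hw.add (hf.hasSum.mul_left a))).congr_fun fun m => ?_
    simp only [Function.comp_apply, Equiv.subRight_apply, w, Int.cast_sub, Int.cast_one]
    ring
  have hright : HasSum (fun m : ℤ => (a * m + b) * f (m + 1)) (∑' m, w m - a * ∑' m, f m) := by
    refine ((Equiv.addRight 1).hasSum_iff.mpr (hw.sub (hf.hasSum.mul_left a))).congr_fun fun m => ?_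
    simp only [Function.comp_apply, Equiv.coe_addRight, w, Int.cast_add, Int.cast_one]
    ring
  have hcancel : ∑' m, w m + a * ∑' m, f m + (∑' m, w m - a * ∑' m, f m) - 2 * ∑' m, w m = 0 := by
    ring
  refine hcancel ▸ ((hleft.add hright).sub (hw.mul_left 2)).congr_fun fun m => ?_
  simp only [w]
  ring

end SecondDifference

section FiniteJacobi

variable {K : Type*} [Field K]

/-- The `q`-Pochhammer symbol `(q; q)_n = ∏_{k=1}^n (1 - q^k)`. -/
def qPochhammer (q : K) (n : ℕ) : K := ∏ k ∈ Finset.range n, (1 - q ^ (k + 1))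

/-- The reciprocal `1 / (q; q)_m`, extended by zero to `m < 0`, so that
`qPochhammerInv_eq_mul` holds for all integers and sums against it terminate. -/
def qPochhammerInv (q : K) : ℤ → K
  | .ofNat n => (qPochhammer q n)⁻¹
  | .negSucc _ => 0

/-- The coefficient `(-1)^m q^{m(m+1)/2}` of Jacobi's theta series; the division in the exponent is
exact. -/
def thetaCoeff (q : K) (m : ℤ) : K := (-1) ^ m * q ^ (m * (m + 1) / 2)

/-- The theta coefficient damped by `1 / ((q; q)_{n+1+m} (q; q)_{n-m})`; it vanishes unless
`-n - 1 ≤ m ≤ n`, so it is the `m`-th term of the `n`-th finite form of Jacobi's identity. -/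
def finiteThetaCoeff (q : K) (n : ℕ) (m : ℤ) : K :=
  thetaCoeff q m * (qPochhammerInv q (n + 1 + m) * qPochhammerInv q (n - m))

variable {q : K}

lemma qPochhammer_succ (q : K) (n : ℕ) :
    qPochhammer q (n + 1) = qPochhammer q n * (1 - q ^ (n + 1)) :=
  Finset.prod_range_succ _ n

lemma qPochhammer_ne_zero (hq : ∀ n : ℕ, q ^ (n + 1) ≠ 1) (n : ℕ) : qPochhammer q n ≠ 0 :=
  Finset.prod_ne_zero_iff.mpr fun k _ => sub_ne_zero.mpr (hq k).symm

lemma qPochhammerInv_natCast (q : K) (n : ℕ) : qPochhammerInv q n = (qPochhammer q n)⁻¹ := rfl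

lemma qPochhammerInv_of_neg (q : K) : ∀ {m : ℤ}, m < 0 → qPochhammerInv q m = 0
  | .negSucc _, _ => rfl

lemma qPochhammerInv_eq_mul (hq : ∀ n : ℕ, q ^ (n + 1) ≠ 1) (m : ℤ) :
    qPochhammerInv q m = (1 - q ^ (m + 1)) * qPochhammerInv q (m + 1) := by
  rcases lt_trichotomy m (-1) with hm | rfl | hm
  · rw [qPochhammerInv_of_neg q (by lia), qPochhammerInv_of_neg q (by lia), mul_zero]
  · rw [qPochhammerInv_of_neg q (by lia), neg_add_cancel, zpow_zero, sub_self, zero_mul]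
  · lift m to ℕ using by lia
    have hfactor : 1 - q ^ (m + 1) ≠ 0 := sub_ne_zero.mpr (hq m).symm
    rw [← Nat.cast_succ, qPochhammerInv_natCast, qPochhammerInv_natCast, zpow_natCast,
      Nat.succ_eq_add_one, qPochhammer_succ]
    field_simp

lemma qPochhammerInv_natCast_add (hq₀ : q ≠ 0) (hq : ∀ n : ℕ, q ^ (n + 1) ≠ 1) (k : ℕ) (m : ℤ) :
    qPochhammerInv q (k + m) =
      (1 - q ^ (k + 1) * q ^ m) * qPochhammerInv q ((k + 1 : ℕ) + m) := by
  rw [qPochhammerInv_eq_mul hq, ← zpow_natCast, ← zpow_add₀ hq₀, Nat.cast_succ, add_right_comm]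

lemma qPochhammerInv_natCast_sub (hq₀ : q ≠ 0) (hq : ∀ n : ℕ, q ^ (n + 1) ≠ 1) (k : ℕ) (m : ℤ) :
    qPochhammerInv q (k - m) =
      (1 - q ^ (k + 1) / q ^ m) * qPochhammerInv q ((k + 1 : ℕ) - m) := by
  rw [qPochhammerInv_eq_mul hq, ← zpow_natCast, ← zpow_sub₀ hq₀, Nat.cast_succ,
    sub_add_eq_add_sub]

lemma thetaCoeff_add_one (hq₀ : q ≠ 0) (m : ℤ) :
    thetaCoeff q (m + 1) = -q ^ (m + 1) * thetaCoeff q m := by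
  have hexp : (m + 1) * (m + 1 + 1) / 2 = m * (m + 1) / 2 + (m + 1) := by
    rw [← Int.add_mul_ediv_right _ _ two_ne_zero]
    ring_nf
  rw [thetaCoeff, thetaCoeff, hexp, zpow_add₀ hq₀, zpow_add_one₀ (neg_ne_zero.mpr one_ne_zero)]
  ring

lemma thetaCoeff_sub_one (hq₀ : q ≠ 0) (m : ℤ) :
    thetaCoeff q (m - 1) = -(q ^ m)⁻¹ * thetaCoeff q m := by
  have h := thetaCoeff_add_one hq₀ (m - 1)
  rw [sub_add_cancel] at h
  have hqm : q ^ m ≠ 0 := zpow_ne_zero m hq₀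
  rw [h]
  field_simp

lemma finiteThetaCoeff_eq_zero {n : ℕ} {m : ℤ} (hm : m ∉ Finset.Icc (-n - 1 : ℤ) n) :
    finiteThetaCoeff q n m = 0 := by
  rw [Finset.mem_Icc, not_and_or, not_le, not_le] at hm
  rcases hm with hm | hm
  · rw [finiteThetaCoeff, qPochhammerInv_of_neg q (m := n + 1 + m) (by lia), zero_mul, mul_zero]
  · rw [finiteThetaCoeff, qPochhammerInv_of_neg q (m := n - m) (by lia), mul_zero, mul_zero]

lemma finiteThetaCoeff_succ (hq₀ : q ≠ 0) (hq : ∀ n : ℕ, q ^ (n + 1) ≠ 1) (n : ℕ) (m : ℤ) :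
    (1 - q ^ (2 * n + 2)) * (1 - q ^ (2 * n + 3)) * finiteThetaCoeff q (n + 1) m =
      (1 - q ^ (n + 1)) ^ 2 * finiteThetaCoeff q n m -
        q ^ (n + 1) * (finiteThetaCoeff q n (m - 1) - 2 * finiteThetaCoeff q n m +
          finiteThetaCoeff q n (m + 1)) := by
  have hy : q ^ m ≠ 0 := zpow_ne_zero m hq₀
  have hθ_right : thetaCoeff q (m + 1) = -(q * q ^ m) * thetaCoeff q m := by
    rw [thetaCoeff_add_one hq₀, zpow_add_one₀ hq₀, mul_comm q]
  have hnext : finiteThetaCoeff q (n + 1) m = thetaCoeff q m *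
      (qPochhammerInv q ((n + 2 : ℕ) + m) * qPochhammerInv q ((n + 1 : ℕ) - m)) := by
    rw [finiteThetaCoeff]
    push_cast
    ring_nf
  have hmid : finiteThetaCoeff q n m = thetaCoeff q m *
      ((1 - q ^ (n + 2) * q ^ m) * qPochhammerInv q ((n + 2 : ℕ) + m) *
        ((1 - q ^ (n + 1) / q ^ m) * qPochhammerInv q ((n + 1 : ℕ) - m))) := by
    rw [finiteThetaCoeff, ← Nat.cast_succ, qPochhammerInv_natCast_add hq₀ hq,
      qPochhammerInv_natCast_sub hq₀ hq]
  have hleft : finiteThetaCoeff q n (m - 1) = -(q ^ m)⁻¹ * thetaCoeff q m *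
      ((1 - q ^ (n + 1) * q ^ m) * ((1 - q ^ (n + 2) * q ^ m) *
        qPochhammerInv q ((n + 2 : ℕ) + m)) * qPochhammerInv q ((n + 1 : ℕ) - m)) := by
    rw [finiteThetaCoeff, thetaCoeff_sub_one hq₀, show (n : ℤ) + 1 + (m - 1) = n + m by ring,
      qPochhammerInv_natCast_add hq₀ hq, qPochhammerInv_natCast_add hq₀ hq,
      show (n : ℤ) - (m - 1) = (n + 1 : ℕ) - m by push_cast; ring]
  have hright : finiteThetaCoeff q n (m + 1) = -(q * q ^ m) * thetaCoeff q m *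
      (qPochhammerInv q ((n + 2 : ℕ) + m) * ((1 - q ^ n / q ^ m) *
        ((1 - q ^ (n + 1) / q ^ m) * qPochhammerInv q ((n + 1 : ℕ) - m)))) := by
    rw [finiteThetaCoeff, hθ_right, qPochhammerInv_eq_mul hq (n - (m + 1)),
      show (n : ℤ) - (m + 1) + 1 = n - m by ring, qPochhammerInv_natCast_sub hq₀ hq,
      zpow_sub₀ hq₀, zpow_natCast,
      show (n : ℤ) + 1 + (m + 1) = (n + 2 : ℕ) + m by push_cast; ring]
  rw [hnext, hmid, hleft, hright]
  field_simp
  ring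

variable [TopologicalSpace K] [IsTopologicalRing K]

theorem hasSum_mul_finiteThetaCoeff (hq₀ : q ≠ 0) (hq : ∀ n : ℕ, q ^ (n + 1) ≠ 1) (n : ℕ) :
    HasSum (fun m : ℤ => (2 * m + 1) * finiteThetaCoeff q n m)
      (2 * qPochhammer q n ^ 2 / qPochhammer q (2 * n + 1)) := by
  induction n with
  | zero =>
    have hsupp (m : ℤ) (hm : m ∉ Finset.Icc (-1) 0) : (2 * m + 1) * finiteThetaCoeff q 0 m = 0 := by
      rw [finiteThetaCoeff_eq_zero (by simpa using hm), mul_zero]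
    have hsum : ∑ m ∈ Finset.Icc (-1 : ℤ) 0, (2 * (m : K) + 1) * finiteThetaCoeff q 0 m =
        2 * qPochhammer q 0 ^ 2 / qPochhammer q (2 * 0 + 1) := by
      have hzero : finiteThetaCoeff q 0 0 = (1 - q)⁻¹ := by
        simp [finiteThetaCoeff, thetaCoeff, qPochhammer, qPochhammerInv]
      have hneg_one : finiteThetaCoeff q 0 (-1) = -(1 - q)⁻¹ := by
        simp [finiteThetaCoeff, thetaCoeff, qPochhammer, qPochhammerInv]
      rw [show Finset.Icc (-1 : ℤ) 0 = {-1, 0} by rfl, Finset.sum_pair (by norm_num), hzero,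
        hneg_one, qPochhammer_succ, qPochhammer, Finset.prod_range_zero]
      push_cast
      ring
    exact hsum ▸ hasSum_sum_of_ne_finset_zero hsupp
  | succ n ih =>
    have hsummable (c : ℤ → K) : Summable fun m => c m * finiteThetaCoeff q n m :=
      summable_of_ne_finset_zero fun m hm => by rw [finiteThetaCoeff_eq_zero hm, mul_zero]
    have hdiff := hasSum_affine_mul_second_difference (2 : K) 1
      (by simpa using hsummable 1) (hsummable fun m => m)
    have h₂ : 1 - q ^ (2 * n + 2) ≠ 0 := sub_ne_zero.mpr (hq (2 * n + 1)).symm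
    have h₃ : 1 - q ^ (2 * n + 3) ≠ 0 := sub_ne_zero.mpr (hq (2 * n + 2)).symm
    have hstep := ((ih.mul_left ((1 - q ^ (n + 1)) ^ 2)).sub
      (hdiff.mul_left (q ^ (n + 1)))).div_const ((1 - q ^ (2 * n + 2)) * (1 - q ^ (2 * n + 3)))
    convert hstep using 1
    · funext m
      rw [eq_div_iff (mul_ne_zero h₂ h₃)]
      linear_combination (2 * (m : K) + 1) * finiteThetaCoeff_succ hq₀ hq n m
    · rw [show 2 * (n + 1) + 1 = 2 * n + 1 + 1 + 1 by ring, qPochhammer_succ q n,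
        qPochhammer_succ q (2 * n + 1 + 1), qPochhammer_succ q (2 * n + 1)]
      field_simp [qPochhammer_ne_zero hq (2 * n + 1)]
      ring

end FiniteJacobi

section Jacobi

variable {𝕜 : Type*} [NormedField 𝕜] {q : 𝕜}

lemma summable_affine_mul_zpow_abs (C : ℝ) {r : ℝ} (hr₀ : 0 < r) (hr₁ : r < 1) :
    Summable fun m : ℤ => (|(m : ℝ)| + C) * r ^ (|m| - 1) := by
  have hnat : Summable fun n : ℕ => r⁻¹ * ((n : ℝ) ^ 1 * r ^ n + C * r ^ n) :=
    ((summable_pow_mul_geometric_of_norm_lt_one 1 (by rwa [Real.norm_of_nonneg hr₀.le])).add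
      ((summable_geometric_of_lt_one hr₀.le hr₁).mul_left C)).mul_left r⁻¹
  have hterm (n : ℕ) :
      r⁻¹ * ((n : ℝ) ^ 1 * r ^ n + C * r ^ n) = ((n : ℝ) + C) * r ^ ((n : ℤ) - 1) := by
    rw [zpow_sub_one₀ hr₀.ne', zpow_natCast]
    ring
  refine .of_nat_of_neg (hnat.congr fun n => ?_) (hnat.congr fun n => ?_)
  · rw [hterm, Int.cast_natCast, Nat.abs_cast, Nat.abs_cast]
  · rw [hterm, Int.cast_neg, abs_neg, abs_neg, Int.cast_natCast, Nat.abs_cast, Nat.abs_cast]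

lemma norm_thetaCoeff_le {r : ℝ} (hr₀ : 0 < r) (hr₁ : r ≤ 1) (hqr : ‖q‖ ≤ r) (m : ℤ) :
    ‖thetaCoeff q m‖ ≤ r ^ (|m| - 1) := by
  have hexp : |m| - 1 ≤ m * (m + 1) / 2 := by
    rw [Int.le_ediv_iff_mul_le two_pos]
    rcases abs_cases m with ⟨h, _⟩ | ⟨h, _⟩ <;> rw [h] <;>
      nlinarith [sq_nonneg (2 * m - 1), sq_nonneg (2 * m + 3)]
  have hexp₀ : 0 ≤ m * (m + 1) / 2 := by
    refine Int.ediv_nonneg ?_ two_pos.le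
    rcases le_or_gt 0 m with hm | hm <;> nlinarith
  calc ‖thetaCoeff q m‖ = ‖q‖ ^ (m * (m + 1) / 2) := by
        rw [thetaCoeff, norm_mul, norm_zpow, norm_zpow, norm_neg, norm_one, one_zpow, one_mul]
    _ ≤ r ^ (m * (m + 1) / 2) := zpow_le_zpow_left₀ hexp₀ (norm_nonneg q) hqr
    _ ≤ r ^ (|m| - 1) := zpow_le_zpow_right_of_le_one₀ hr₀ hr₁ hexp

lemma norm_intCast_le_abs (m : ℤ) : ‖(m : 𝕜)‖ ≤ |(m : ℝ)| := by
  rcases Int.eq_nat_or_neg m with ⟨n, rfl | rfl⟩ <;>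
    simpa using Nat.norm_cast_le (α := 𝕜) n

lemma summable_norm_mul_thetaCoeff (hq₀ : q ≠ 0) (hq : ‖q‖ < 1) :
    Summable fun m : ℤ => ‖(2 * m + 1) * thetaCoeff q m‖ := by
  refine .of_nonneg_of_le (fun _ => norm_nonneg _) (fun m => ?_)
    ((summable_affine_mul_zpow_abs 1 (norm_pos_iff.mpr hq₀) hq).mul_left 2)
  have hcoeff : ‖2 * (m : 𝕜) + 1‖ ≤ 2 * (|(m : ℝ)| + 1) := by
    have htwo : ‖(2 : 𝕜)‖ ≤ 2 := by simpa using Nat.norm_cast_le (α := 𝕜) 2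
    calc ‖2 * (m : 𝕜) + 1‖ ≤ ‖(2 : 𝕜)‖ * ‖(m : 𝕜)‖ + 1 := by
          simpa using norm_add_le (2 * (m : 𝕜)) 1
      _ ≤ 2 * |(m : ℝ)| + 1 := by gcongr; exact norm_intCast_le_abs m
      _ ≤ 2 * (|(m : ℝ)| + 1) := by linarith
  rw [norm_mul, ← mul_assoc]
  gcongr
  exact norm_thetaCoeff_le (norm_pos_iff.mpr hq₀) hq.le le_rfl m

lemma pow_succ_ne_one_of_norm_lt_one (hq : ‖q‖ < 1) (n : ℕ) : q ^ (n + 1) ≠ 1 := fun h =>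
  (pow_lt_one₀ (norm_nonneg q) hq n.succ_ne_zero).ne (by rw [← norm_pow, h, norm_one])

lemma summable_norm_neg_pow_succ (hq : ‖q‖ < 1) : Summable fun n : ℕ => ‖-q ^ (n + 1)‖ := by
  simpa only [norm_neg, norm_pow] using
    (summable_nat_add_iff 1).mpr (summable_geometric_of_lt_one (norm_nonneg q) hq)

variable [CompleteSpace 𝕜]

lemma tprod_one_sub_pow_succ_ne_zero (hq : ‖q‖ < 1) : ∏' n : ℕ, (1 - q ^ (n + 1)) ≠ 0 := by
  simp only [sub_eq_add_neg]
  refine tprod_one_add_ne_zero_of_summable (fun n => ?_) (summable_norm_neg_pow_succ hq)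
  rw [← sub_eq_add_neg]
  exact sub_ne_zero.mpr (pow_succ_ne_one_of_norm_lt_one hq n).symm

lemma tendsto_qPochhammer (hq : ‖q‖ < 1) :
    Tendsto (qPochhammer q) atTop (𝓝 (∏' n : ℕ, (1 - q ^ (n + 1)))) := by
  have hmult : Multipliable fun n : ℕ => 1 + -q ^ (n + 1) :=
    multipliable_one_add_of_summable (summable_norm_neg_pow_succ hq)
  simp only [← sub_eq_add_neg] at hmult
  exact hmult.hasProd.tendsto_prod_nat

lemma tendsto_qPochhammerInv (hq : ‖q‖ < 1) :
    Tendsto (qPochhammerInv q) atTop (𝓝 (∏' n : ℕ, (1 - q ^ (n + 1)))⁻¹) := by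
  rw [← Nat.map_cast_int_atTop, tendsto_map'_iff]
  exact (tendsto_qPochhammer hq).inv₀ (tprod_one_sub_pow_succ_ne_zero hq)

lemma exists_norm_qPochhammerInv_le (hq : ‖q‖ < 1) : ∃ C, ∀ m, ‖qPochhammerInv q m‖ ≤ C := by
  obtain ⟨C, hC⟩ := ((tendsto_qPochhammer hq).inv₀
    (tprod_one_sub_pow_succ_ne_zero hq)).norm.bddAbove_range
  have hnat (n : ℕ) : ‖qPochhammerInv q n‖ ≤ C := hC ⟨n, rfl⟩
  refine ⟨C, fun m => ?_⟩
  rcases le_or_gt 0 m with hm | hm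
  · lift m to ℕ using hm
    exact hnat m
  · rw [qPochhammerInv_of_neg q hm, norm_zero]
    exact (norm_nonneg _).trans (hnat 0)

lemma tendsto_finiteThetaCoeff (hq : ‖q‖ < 1) (m : ℤ) :
    Tendsto (fun n => finiteThetaCoeff q n m) atTop
      (𝓝 (thetaCoeff q m * (∏' n : ℕ, (1 - q ^ (n + 1)))⁻¹ ^ 2)) := by
  have hplus : Tendsto (fun n : ℕ => (n : ℤ) + 1 + m) atTop atTop :=
    tendsto_atTop_add_const_right _ _
      (tendsto_atTop_add_const_right _ _ tendsto_natCast_atTop_atTop)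
  have hminus : Tendsto (fun n : ℕ => (n : ℤ) - m) atTop atTop :=
    tendsto_atTop_add_const_right _ (-m) tendsto_natCast_atTop_atTop
  rw [sq]
  exact (((tendsto_qPochhammerInv hq).comp hplus).mul
    ((tendsto_qPochhammerInv hq).comp hminus)).const_mul _

theorem tsum_mul_thetaCoeff (hq₀ : q ≠ 0) (hq : ‖q‖ < 1) :
    ∑' m : ℤ, (2 * m + 1) * thetaCoeff q m = 2 * (∏' n : ℕ, (1 - q ^ (n + 1))) ^ 3 := by
  set P := ∏' n : ℕ, (1 - q ^ (n + 1))
  have hP : P ≠ 0 := tprod_one_sub_pow_succ_ne_zero hq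
  obtain ⟨C, hC⟩ := exists_norm_qPochhammerInv_le hq
  have hdom (n : ℕ) (m : ℤ) : ‖(2 * m + 1) * finiteThetaCoeff q n m‖ ≤
      ‖(2 * m + 1) * thetaCoeff q m‖ * (C * C) := by
    rw [finiteThetaCoeff, ← mul_assoc, norm_mul _ (_ * _), norm_mul (qPochhammerInv q _)]
    gcongr
    · exact (norm_nonneg _).trans (hC 0)
    · exact hC _
    · exact hC _
  have hlim := tendsto_tsum_of_dominated_convergence
    ((summable_norm_mul_thetaCoeff hq₀ hq).mul_right (C * C))
    (fun m => (tendsto_finiteThetaCoeff hq m).const_mul (2 * (m : 𝕜) + 1)) (.of_forall hdom)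
  have hfinite (n : ℕ) := (hasSum_mul_finiteThetaCoeff hq₀
    (pow_succ_ne_one_of_norm_lt_one hq) n).tsum_eq
  have hodd : Tendsto (fun n : ℕ => 2 * n + 1) atTop atTop :=
    tendsto_atTop_mono (fun n => by simp only [id]; lia) tendsto_id
  have hlim' := (((tendsto_qPochhammer hq).pow 2).const_mul 2).div
    ((tendsto_qPochhammer hq).comp hodd) hP
  have heq := tendsto_nhds_unique (hlim.congr hfinite) hlim'
  simp only [← mul_assoc, tsum_mul_right] at heq
  change _ * P⁻¹ ^ 2 = 2 * P ^ 2 / P at heq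
  field_simp at heq
  linear_combination heq

end Jacobi

section EtaCubed

variable {τ : ℂ}

lemma e_ne_zero (a : ℂ) : e a ≠ 0 := exp_ne_zero _

lemma e_add (a b : ℂ) : e (a + b) = e a * e b := by
  rw [e, mul_add, exp_add, e, e]

lemma e_intCast_mul (n : ℤ) (a : ℂ) : e (n * a) = e a ^ n := by
  rw [e, e, ← exp_int_mul]
  ring_nf

@[fun_prop]
lemma differentiable_e : Differentiable ℂ e := by
  unfold e
  fun_prop

lemma norm_e_lt_one (hτ : 0 < τ.im) : ‖e τ‖ < 1 :=
  UpperHalfPlane.norm_exp_two_pi_I_lt_one ⟨τ, hτ⟩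

lemma e_half : e (1 / 2) = -1 := by
  rw [e, show 2 * (Real.pi : ℂ) * I * (1 / 2) = Real.pi * I by ring, exp_pi_mul_I]

lemma e_quarter : e (1 / 4) = I := by
  rw [e, show 2 * (Real.pi : ℂ) * I * (1 / 4) = Real.pi / 2 * I by ring, exp_pi_div_two_mul_I]

lemma e_half_integer_sq (τ : ℂ) (m : ℤ) :
    e (((m : ℂ) + 1 / 2) ^ 2 / 2 * τ + ((m : ℂ) + 1 / 2) / 2) =
      I * e (τ / 8) * thetaCoeff (e τ) m := by
  have htriangle : ((m * (m + 1) / 2 : ℤ) : ℂ) = m * (m + 1) / 2 := by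
    rw [Int.cast_div (Int.even_mul_succ_self m).two_dvd two_ne_zero]
    push_cast
    rfl
  have hsplit : ((m : ℂ) + 1 / 2) ^ 2 / 2 * τ + ((m : ℂ) + 1 / 2) / 2 =
      1 / 4 + τ / 8 + (m * (1 / 2) + (m * (m + 1) / 2 : ℤ) * τ) := by
    rw [htriangle]
    ring
  rw [hsplit, e_add, e_add, e_add, e_intCast_mul, e_intCast_mul, e_quarter, e_half, thetaCoeff]

theorem eta3_eq_eta_pow_three (hτ : 0 < τ.im) : eta3 τ = ModularForm.eta τ ^ 3 := by
  have hcube : e (τ / 8) = Function.Periodic.qParam 24 τ ^ 3 := by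
    rw [e, Function.Periodic.qParam, ← exp_nat_mul]
    push_cast
    ring_nf
  have hprod : ∏' n, (1 - ModularForm.eta_q n τ) = ∏' n : ℕ, (1 - e τ ^ (n + 1)) :=
    tprod_congr fun n => by rw [ModularForm.eta_q_eq_pow, e]
  have hterm (m : ℤ) :
      ((m : ℂ) + 1 / 2) * e (((m : ℂ) + 1 / 2) ^ 2 / 2 * τ + ((m : ℂ) + 1 / 2) / 2) =
        I * e (τ / 8) / 2 * ((2 * m + 1) * thetaCoeff (e τ) m) := by
    rw [e_half_integer_sq]
    ring
  rw [eta3, tsum_congr hterm, tsum_mul_left, tsum_mul_thetaCoeff (e_ne_zero τ) (norm_e_lt_one hτ),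
    ModularForm.eta, hprod, mul_pow, ← hcube]
  linear_combination -e (τ / 8) * (∏' n : ℕ, (1 - e τ ^ (n + 1))) ^ 3 * I_sq

lemma eta3_ne_zero (hτ : 0 < τ.im) : eta3 τ ≠ 0 :=
  eta3_eq_eta_pow_three hτ ▸ pow_ne_zero 3 (ModularForm.eta_ne_zero hτ)

lemma differentiableAt_eta3 (hτ : 0 < τ.im) : DifferentiableAt ℂ eta3 τ := by
  have hev : eta3 =ᶠ[𝓝 τ] fun σ => ModularForm.eta σ ^ 3 := by
    filter_upwards [(isOpen_lt continuous_const continuous_im).mem_nhds hτ] with σ hσ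
    exact eta3_eq_eta_pow_three hσ
  exact hev.differentiableAt_iff.mpr
    ((ModularForm.differentiableAt_eta_of_mem_upperHalfPlaneSet hτ).pow 3)

end EtaCubed

section HolomorphicPart

lemma differentiableAt_thetaCoeff {q : ℂ} (hq₀ : q ≠ 0) (m : ℤ) :
    DifferentiableAt ℂ (thetaCoeff · m) q :=
  (differentiableAt_zpow.mpr (.inl hq₀)).const_mul _

lemma differentiableAt_tsum_mul_thetaCoeff {a : ℤ → ℂ} {C : ℝ} (ha : ∀ m, ‖a m‖ ≤ |(m : ℝ)| + C)
    {q : ℂ} (hq₀ : q ≠ 0) (hq : ‖q‖ < 1) :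
    DifferentiableAt ℂ (fun q => ∑' m, a m * thetaCoeff q m) q := by
  obtain ⟨r, hqr, hr₁⟩ := exists_between hq
  have hr₀ : 0 < r := (norm_nonneg q).trans_lt hqr
  have hU : IsOpen ({0}ᶜ ∩ Metric.ball (0 : ℂ) r) := isOpen_compl_singleton.inter Metric.isOpen_ball
  have hdiff := differentiableOn_tsum_of_summable_norm (summable_affine_mul_zpow_abs C hr₀ hr₁)
    (F := fun m q => a m * thetaCoeff q m)
    (fun m p hp => ((differentiableAt_thetaCoeff hp.1 m).const_mul (a m)).differentiableWithinAt)
    hU fun m p hp => by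
      rw [norm_mul]
      exact mul_le_mul (ha m) (norm_thetaCoeff_le hr₀ hr₁.le (mem_ball_zero_iff.mp hp.2).le m)
        (norm_nonneg _) ((norm_nonneg _).trans (ha m))
  exact hdiff.differentiableAt (hU.mem_nhds ⟨hq₀, mem_ball_zero_iff.mpr hqr⟩)

theorem differentiableAt_gplus (x : ℝ) {τ : ℂ} (hτ : 0 < τ.im) :
    DifferentiableAt ℂ (gplus · x) τ := by
  let a (m : ℤ) : ℂ := if |x| < m + 1 / 2 then ((m + 1 / 2 - |x| : ℝ) : ℂ) else 0
  have ha (m : ℤ) : ‖a m‖ ≤ |(m : ℝ)| + 1 := by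
    dsimp only [a]
    split_ifs with hm
    · rw [norm_real, Real.norm_of_nonneg (by linarith)]
      linarith [le_abs_self (m : ℝ), abs_nonneg x]
    · rw [norm_zero]
      positivity
  have hseries : (fun σ => ∑' m : ℤ, if |x| < (m : ℝ) + 1 / 2 then
      (((m : ℝ) + 1 / 2 - |x| : ℝ) : ℂ) *
        e (((m : ℂ) + 1 / 2) ^ 2 / 2 * σ + ((m : ℂ) + 1 / 2) / 2) else 0) =
      fun σ => I * e (σ / 8) * ∑' m, a m * thetaCoeff (e σ) m := by
    funext σ
    rw [← tsum_mul_left]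
    refine tsum_congr fun m => ?_
    rw [e_half_integer_sq, mul_left_comm (((_ : ℝ) : ℂ)), ite_mul, zero_mul, mul_ite, mul_zero]
  have hsum : DifferentiableAt ℂ (fun σ => ∑' m, a m * thetaCoeff (e σ) m) τ :=
    (differentiableAt_tsum_mul_thetaCoeff ha (e_ne_zero τ) (norm_e_lt_one hτ)).comp τ
      (differentiable_e τ)
  unfold gplus
  refine .mul (.mul (by fun_prop) (.div (by fun_prop) ((differentiableAt_eta3 hτ).const_mul I)
    (mul_ne_zero I_ne_zero (eta3_ne_zero hτ)))) ?_
  rw [hseries]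
  exact .mul (by fun_prop) hsum

end HolomorphicPart

section Erfc

lemma hasDerivAt_erfc (y : ℝ) :
    HasDerivAt erfc (-(2 / Real.sqrt Real.pi) * Real.exp (-y ^ 2)) y := by
  have hint : Integrable fun t : ℝ => Real.exp (-t ^ 2) := by
    simpa using integrable_exp_neg_mul_sq one_pos
  have hcont : Continuous fun t : ℝ => Real.exp (-t ^ 2) := by fun_prop
  have hsplit : erfc = fun y => 2 / Real.sqrt Real.pi *
      ((∫ t in Set.Ioi (0 : ℝ), Real.exp (-t ^ 2)) - ∫ t in (0 : ℝ)..y, Real.exp (-t ^ 2)) := by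
    funext y
    rw [erfc, ← intervalIntegral.integral_interval_add_Ioi (a := 0) (b := y) hint.integrableOn
      hint.integrableOn, add_sub_cancel_left]
  rw [hsplit]
  refine (((hcont.integral_hasStrictDerivAt 0 y).hasDerivAt.const_sub _).const_mul _).congr_deriv ?_
  ring

lemma hasDerivAt_erfc_sqrt_mul_abs (x : ℝ) {v : ℝ} (hv : 0 < v) :
    HasDerivAt (fun v => erfc (Real.sqrt (2 * Real.pi * v) * |x|))
      (-(Real.sqrt (2 * v) / v * |x| * Real.exp (-(2 * Real.pi * v * x ^ 2)))) v := by
  have hpos : 0 < 2 * Real.pi * v := by positivity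
  have harg : HasDerivAt (fun v => Real.sqrt (2 * Real.pi * v) * |x|)
      (2 * Real.pi / (2 * Real.sqrt (2 * Real.pi * v)) * |x|) v :=
    (((hasDerivAt_id v).const_mul (2 * Real.pi)).congr_deriv (mul_one _)).sqrt hpos.ne'
      |>.mul_const _
  have hsq : (Real.sqrt (2 * Real.pi * v) * |x|) ^ 2 = 2 * Real.pi * v * x ^ 2 := by
    rw [mul_pow, Real.sq_sqrt hpos.le, sq_abs]
  have hsqrt : Real.sqrt (2 * Real.pi * v) = Real.sqrt Real.pi * Real.sqrt (2 * v) := by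
    rw [← Real.sqrt_mul Real.pi_pos.le]
    ring_nf
  have hπ : Real.sqrt Real.pi ^ 2 = Real.pi := Real.sq_sqrt Real.pi_pos.le
  have h2v : Real.sqrt (2 * v) ^ 2 = 2 * v := Real.sq_sqrt (by positivity)
  have hπ₀ : Real.sqrt Real.pi ≠ 0 := by positivity
  have h2v₀ : Real.sqrt (2 * v) ≠ 0 := by positivity
  refine ((hasDerivAt_erfc _).comp v harg).congr_deriv ?_
  rw [hsq, hsqrt]
  field_simp
  rw [hπ, h2v]
  ring

end Erfc

section Xi

variable {k : ℝ} {f g : ℂ → ℂ} {τ : ℂ}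

lemma xi_sub (hf : DifferentiableAt ℝ f τ) (hg : DifferentiableAt ℝ g τ) :
    xi k (fun σ => f σ - g σ) τ = xi k f τ - xi k g τ := by
  rw [xi, xi, xi, fderiv_fun_sub hf hg, ← mul_sub, ← map_sub]
  simp only [_root_.sub_apply]
  ring_nf

lemma xi_eq_zero_of_differentiableAt (hf : DifferentiableAt ℂ f τ) : xi k f τ = 0 := by
  have hI : fderiv ℂ f τ I = I * fderiv ℂ f τ 1 := by
    rw [← smul_eq_mul, ← map_smul, smul_eq_mul, mul_one]
  rw [xi, hf.fderiv_restrictScalars ℝ, ContinuousLinearMap.coe_restrictScalars', hI, ← mul_assoc,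
    I_mul_I, neg_one_mul, add_neg_cancel, mul_zero, map_zero, mul_zero]

lemma xi_mul (hf : DifferentiableAt ℝ f τ) (hg : DifferentiableAt ℝ g τ) :
    xi k (fun σ => f σ * g σ) τ =
      starRingEnd ℂ (f τ) * xi k g τ + starRingEnd ℂ (g τ) * xi k f τ := by
  rw [xi, xi, xi, fderiv_fun_mul hf hg]
  simp only [_root_.add_apply, _root_.smul_apply, smul_eq_mul, map_mul, map_add]
  ring

lemma hasFDerivAt_ofReal_comp_im {φ : ℝ → ℝ} {φ' : ℝ} (hφ : HasDerivAt φ φ' τ.im) :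
    HasFDerivAt (fun σ : ℂ => (φ σ.im : ℂ)) (ofRealCLM.comp (φ' • imCLM)) τ :=
  ofRealCLM.hasFDerivAt.comp τ (hφ.comp_hasFDerivAt τ imCLM.hasFDerivAt)

lemma xi_ofReal_comp_im {φ : ℝ → ℝ} {φ' : ℝ} (hφ : HasDerivAt φ φ' τ.im) :
    xi k (fun σ => (φ σ.im : ℂ)) τ = ((τ.im ^ k * φ' : ℝ) : ℂ) := by
  rw [xi, (hasFDerivAt_ofReal_comp_im hφ).fderiv]
  simp only [ContinuousLinearMap.comp_apply, _root_.smul_apply, imCLM_apply, ofRealCLM_apply,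
    one_im, I_im, smul_eq_mul, mul_zero, mul_one, ofReal_zero, zero_add, map_mul, map_div₀, map_one,
    map_ofNat, conj_I, conj_ofReal]
  push_cast
  linear_combination -((τ.im ^ k : ℝ) : ℂ) * φ' * I_sq

end Xi

section NonholomorphicPart

lemma real_sign_mul_abs (x : ℝ) : Real.sign x * |x| = x := by
  rcases lt_trichotomy x 0 with hx | rfl | hx
  · rw [Real.sign_of_neg hx, abs_of_neg hx, neg_one_mul, neg_neg]
  · rw [abs_zero, mul_zero]
  · rw [Real.sign_of_pos hx, abs_of_pos hx, one_mul]

lemma conj_e_mul_exp (x : ℝ) (τ : ℂ) :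
    starRingEnd ℂ (e (-(x : ℂ) ^ 2 * τ / 2)) * (Real.exp (-(2 * Real.pi * τ.im * x ^ 2)) : ℂ) =
      e ((x : ℂ) ^ 2 * τ / 2) := by
  rw [e, e, ← exp_conj, ofReal_exp, ← exp_add]
  simp only [map_mul, map_div₀, map_neg, map_pow, conj_ofReal, conj_I, map_ofNat]
  push_cast
  rw [im_eq_sub_conj]
  congr 1
  field_simp
  rw [I_sq]
  ring

lemma differentiableAt_gstar_prefactor (x : ℝ) (τ : ℂ) :
    DifferentiableAt ℂ (fun σ => e (-(x : ℂ) ^ 2 * σ / 2) * ((Real.sign x : ℂ) / 2)) τ := by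
  fun_prop

lemma differentiableAt_gstar (x : ℝ) {τ : ℂ} (hτ : 0 < τ.im) :
    DifferentiableAt ℝ (gstar · x) τ :=
  ((differentiableAt_gstar_prefactor x τ).restrictScalars ℝ).mul
    (hasFDerivAt_ofReal_comp_im (hasDerivAt_erfc_sqrt_mul_abs x hτ)).differentiableAt

theorem xi_gstar (x : ℝ) {τ : ℂ} (hτ : 0 < τ.im) :
    xi 1 (gstar · x) τ = -(((Real.sqrt (2 * τ.im) / 2 : ℝ) : ℂ) * x * e ((x : ℂ) ^ 2 * τ / 2)) := by
  have herfc := hasDerivAt_erfc_sqrt_mul_abs x hτ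
  have hsign : (Real.sign x : ℂ) * |x| = x := mod_cast real_sign_mul_abs x
  have him : (τ.im : ℂ) ≠ 0 := mod_cast hτ.ne'
  have hprod := xi_mul (k := 1) ((differentiableAt_gstar_prefactor x τ).restrictScalars ℝ)
    (hasFDerivAt_ofReal_comp_im herfc).differentiableAt
  rw [xi_eq_zero_of_differentiableAt (differentiableAt_gstar_prefactor x τ), mul_zero, add_zero,
    xi_ofReal_comp_im herfc, Real.rpow_one] at hprod
  refine hprod.trans ?_
  rw [map_mul, map_div₀, conj_ofReal, map_ofNat, ← conj_e_mul_exp, ← hsign]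
  push_cast
  field_simp

end NonholomorphicPart

/-- `ξ₁ g_τ(x) = (√(2v)/2)·x·e(x²τ/2)`. -/
theorem xi_gfun (x : ℝ) (τ : ℂ) (hτ : 0 < τ.im) :
    xi 1 (fun σ => gfun σ x) τ =
      ((Real.sqrt (2 * τ.im) / 2 : ℝ) : ℂ) * (x : ℂ) * e ((x : ℂ)^2 * τ / 2) := by
  have hgplus : DifferentiableAt ℂ (gplus · x) τ := differentiableAt_gplus x hτ
  calc xi 1 (fun σ => gfun σ x) τ
      = xi 1 (gplus · x) τ - xi 1 (gstar · x) τ :=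
        xi_sub (hgplus.restrictScalars ℝ) (differentiableAt_gstar x hτ)
    _ = 0 - xi 1 (gstar · x) τ := by rw [xi_eq_zero_of_differentiableAt hgplus]
    _ = ((Real.sqrt (2 * τ.im) / 2 : ℝ) : ℂ) * (x : ℂ) * e ((x : ℂ)^2 * τ / 2) := by
        rw [xi_gstar x hτ, zero_sub, neg_neg]
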